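/- For a complex number x with |x| < 1, set D_y(x) = Σ_{r≥0} (2r+1) x^{16(2r+1)²} + Σ_{0≤r<s} (2r+2s+2) x^{16(2r+1)(2s+1)}, D_{yz}(x) = Σ_{r,s≥1} [ −(4r+4s−2) x^{32(2r−1)s} + (2r+2s) x^{64rs} ], and F(x) = ∏_{n=1}^∞ (1 − xⁿ). Then ( D_{yz}(x) − 1/4 )² · 16 x^{32} F(x^{64})^{24} = D_y(x)² · ( 64 x^{32} F(x^{64})^{24} + F(x^{32})^{24} ). (This is the cleared-denominator, squared form of the statement that the generalized SYZ map σ(q_d) = (d_{yz}(q_d) − (4q_d⁴)^{−1})/d_y(q_d) of ℙ¹_{2,4,4} equals the inverse mirror map −2(1 + η(q)^{24}/(2⁶η(q²)^{24}))^{1/2} with q = x^{32}.) -/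

import Mathlib

open scoped BigOperators

/-- The Euler product `F(x) = ∏_{n=1}^∞ (1 − xⁿ)`. -/
noncomputable def eulerF (x : ℂ) : ℂ := ∏' n : ℕ, (1 - x ^ (n + 1))

/-- `D_y(x) = Σ_{r≥0} (2r+1) x^{16(2r+1)²} + Σ_{0≤r<s} (2r+2s+2) x^{16(2r+1)(2s+1)}`,
which is `x⁴·d_y(x)` for the coefficient `d_y` of `y⁴` in the open
Gromov–Witten potential of `ℙ¹_{2,4,4}`. -/
noncomputable def Dy (x : ℂ) : ℂ :=
  (∑' r : ℕ, (2 * (r : ℂ) + 1) * x ^ (16 * (2 * r + 1) ^ 2))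
    + ∑' p : {p : ℕ × ℕ // p.1 < p.2},
        (2 * ((p : ℕ × ℕ).1 : ℂ) + 2 * ((p : ℕ × ℕ).2 : ℂ) + 2)
          * x ^ (16 * (2 * (p : ℕ × ℕ).1 + 1) * (2 * (p : ℕ × ℕ).2 + 1))

/-- `D_{yz}(x) = Σ_{r,s≥1} [−(4r+4s−2) x^{32(2r−1)s} + (2r+2s) x^{64rs}]`,
which is `x⁴·d_{yz}(x)` for the coefficient `d_{yz}` of `y²z²` in the open
Gromov–Witten potential of `ℙ¹_{2,4,4}` (indexed by `r = k+1`, `s = l+1`). -/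
noncomputable def Dyz (x : ℂ) : ℂ :=
  ∑' p : ℕ × ℕ,
    (-(4 * ((p.1 : ℂ) + 1) + 4 * ((p.2 : ℂ) + 1) - 2)
        * x ^ (32 * (2 * (p.1 + 1) - 1) * (p.2 + 1))
      + (2 * ((p.1 : ℂ) + 1) + 2 * ((p.2 : ℂ) + 1)) * x ^ (64 * (p.1 + 1) * (p.2 + 1)))

/-!
Write `t = x ^ 16` and `q = t ^ 2`. Everything is reduced to the theta series `θ = theta` and
`ψ = psi` and to the Lambert series `P = lambert`, whose relations follow from the Jacobi triple
product.

Splitting the double series by parity gives `Dy x = ∑ σ(n) t ^ n` over odd `n`, and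
`Dyz x = 12 P(q ^ 2) - 6 P(q)`. The Wronskian of `θ(q)` and `θ(-q)` is a double theta series; after
a rotation of its lattice by 45 degrees half of it cancels, and the other half is the square of
Jacobi's series `∑ (-1) ^ n (2 n + 1) q ^ (n (n + 1))` for a cube of `F`. As the logarithmic
derivative of `F` is `-P(q) / q`, this becomes `16 Dy x = t ψ(t) ^ 4`.

The same fact shows that `θ(q) ^ 4 - 8 P(q) + 32 P(q ^ 4)` is unchanged under `q ↦ q ^ 2`, hence
constant (Jacobi's four squares theorem), and so `1 / 4 - Dyz x = (θ(q) ^ 4 + q ψ(q) ^ 4) / 4`.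
Since `θ(q) ^ 4 - q ψ(q) ^ 4 = θ(-q) ^ 4`, the square of `θ(q) ^ 4 + q ψ(q) ^ 4` is
`θ(-q) ^ 8 + q ψ(t) ^ 8 / 4`, and the product formulas for `θ(-q)` and `ψ(t)` conclude.
-/

namespace SYZ

open Filter Topology Finset

/-! ### Series and functional equations -/

section General

lemma tsum_eq_tsum_add_tsum_of_isCompl_range {α β γ E : Type*} [AddCommGroup E] [UniformSpace E]
    [IsUniformAddGroup E] [CompleteSpace E] [T2Space E] {i : α → γ} {j : β → γ}
    (hi : i.Injective) (hj : j.Injective) (hij : IsCompl (Set.range i) (Set.range j))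
    {f : γ → E} (hf : Summable f) : ∑' c, f c = ∑' a, f (i a) + ∑' b, f (j b) :=
  ((hi.hasSum_range_iff.mpr (hf.comp_injective hi).hasSum).add_isCompl hij
    (hj.hasSum_range_iff.mpr (hf.comp_injective hj).hasSum)).tsum_eq

lemma tsum_eq_zero_of_apply_equiv_eq_neg {γ E : Type*} [AddCommGroup E] [TopologicalSpace E]
    [IsTopologicalAddGroup E] [T2Space E] [IsAddTorsionFree E] (e : γ ≃ γ) {f : γ → E}
    (hf : ∀ c, f (e c) = -f c) : ∑' c, f c = 0 := by
  rw [← self_eq_neg, ← tsum_neg, ← e.tsum_eq f]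
  exact tsum_congr hf

variable {E : Type*} [AddCommGroup E] [UniformSpace E] [IsUniformAddGroup E] [CompleteSpace E]
  [T2Space E]

-- The sublattice `a ≡ b (mod 2)` of `ℤ × ℤ` is the image of `ℤ × ℤ` under a scaled rotation.
lemma tsum_int_prod_eq_tsum_rotate_add {f : ℤ × ℤ → E} (hf : Summable f) :
    ∑' c, f c = ∑' c : ℤ × ℤ, f (c.1 + c.2, c.1 - c.2)
      + ∑' c : ℤ × ℤ, f (c.1 + c.2 + 1, c.1 - c.2) := by
  refine tsum_eq_tsum_add_tsum_of_isCompl_range (i := fun c : ℤ × ℤ => (c.1 + c.2, c.1 - c.2))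
    (j := fun c : ℤ × ℤ => (c.1 + c.2 + 1, c.1 - c.2)) ?_ ?_ ⟨?_, ?_⟩ hf
  · rintro ⟨a, b⟩ ⟨c, d⟩ h
    grind
  · rintro ⟨a, b⟩ ⟨c, d⟩ h
    grind
  · rw [Set.disjoint_left]
    rintro _ ⟨⟨a, b⟩, rfl⟩ ⟨⟨c, d⟩, h⟩
    grind
  · rw [codisjoint_iff_le_sup]
    rintro ⟨m, n⟩ -
    rcases Int.even_or_odd' (m + n) with ⟨k, hk | hk⟩
    · exact Or.inl ⟨(k, m - k), by grind⟩
    · exact Or.inr ⟨(k, m - 1 - k), by grind⟩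

lemma tsum_mul_tsum_eq_tsum_rotate_add {R : Type*} [NormedRing R] [CompleteSpace R] {f g : ℤ → R}
    (hf : Summable fun n => ‖f n‖) (hg : Summable fun n => ‖g n‖) :
    (∑' n, f n) * ∑' n, g n = ∑' c : ℤ × ℤ, f (c.1 + c.2) * g (c.1 - c.2)
      + ∑' c : ℤ × ℤ, f (c.1 + c.2 + 1) * g (c.1 - c.2) :=
  (tsum_mul_tsum_of_summable_norm hf hg).trans <| tsum_int_prod_eq_tsum_rotate_add
    (f := fun c : ℤ × ℤ => f c.1 * g c.2) (summable_mul_of_summable_norm hf hg)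

lemma tsum_nat_prod_eq_tsum_even_add_tsum_odd {α : Type*} {f : ℕ × α → E} (hf : Summable f) :
    ∑' c, f c = ∑' c : ℕ × α, f (2 * c.1, c.2) + ∑' c : ℕ × α, f (2 * c.1 + 1, c.2) := by
  refine tsum_eq_tsum_add_tsum_of_isCompl_range (i := fun c : ℕ × α => (2 * c.1, c.2))
    (j := fun c : ℕ × α => (2 * c.1 + 1, c.2)) ?_ ?_ ⟨?_, ?_⟩ hf
  · rintro ⟨a, b⟩ ⟨c, d⟩ h
    grind
  · rintro ⟨a, b⟩ ⟨c, d⟩ h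
    grind
  · rw [Set.disjoint_left]
    rintro _ ⟨⟨a, b⟩, rfl⟩ ⟨⟨c, d⟩, h⟩
    grind
  · rw [codisjoint_iff_le_sup]
    rintro ⟨m, a⟩ -
    rcases Nat.even_or_odd' m with ⟨k, rfl | rfl⟩
    · exact Or.inl ⟨(k, a), rfl⟩
    · exact Or.inr ⟨(k, a), rfl⟩

lemma tsum_prod_nat_eq_tsum_even_add_tsum_odd {α : Type*} {f : α × ℕ → E} (hf : Summable f) :
    ∑' c, f c = ∑' c : α × ℕ, f (c.1, 2 * c.2) + ∑' c : α × ℕ, f (c.1, 2 * c.2 + 1) := by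
  rw [← (Equiv.prodComm ℕ α).tsum_eq f, ← (Equiv.prodComm ℕ α).tsum_eq fun c => f (c.1, 2 * c.2),
    ← (Equiv.prodComm ℕ α).tsum_eq fun c => f (c.1, 2 * c.2 + 1)]
  exact tsum_nat_prod_eq_tsum_even_add_tsum_odd hf.prod_symm

lemma tsum_prod_eq_tsum_diag_add_tsum_lt {α : Type*} [LinearOrder α] {f : α × α → E}
    (hf : Summable f) : ∑' c, f c = ∑' a : α, f (a, a)
      + ∑' c : {c : α × α // c.1 < c.2}, (f c + f (c : α × α).swap) := by
  let offDiag : {c : α × α // c.1 < c.2} ⊕ {c : α × α // c.1 < c.2} → α × α :=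
    Sum.elim (fun c => c) fun c => (c : α × α).swap
  have hoff : offDiag.Injective := by
    refine Subtype.val_injective.sumElim (Prod.swap_injective.comp Subtype.val_injective) ?_
    rintro ⟨c, hc⟩ ⟨d, hd⟩ (rfl : c = d.swap)
    exact lt_asymm hc hd
  have hdiag : Function.Injective fun r : α => (r, r) := fun a b h => congrArg Prod.fst h
  have hcompl : IsCompl (Set.range fun r : α => (r, r)) (Set.range offDiag) := by
    refine ⟨Set.disjoint_left.mpr ?_, codisjoint_iff_le_sup.mpr ?_⟩
    · rintro _ ⟨r, rfl⟩ ⟨⟨⟨a, b⟩, h⟩ | ⟨⟨a, b⟩, h⟩, hc⟩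
      · grind
      · grind
    · rintro ⟨a, b⟩ -
      rcases lt_trichotomy a b with h | rfl | h
      · exact Or.inr ⟨Sum.inl ⟨(a, b), h⟩, rfl⟩
      · exact Or.inl ⟨a, rfl⟩
      · exact Or.inr ⟨Sum.inr ⟨(b, a), h⟩, rfl⟩
  have hsum := hf.comp_injective hoff
  have hbelow := hsum.comp_injective Sum.inl_injective
  have habove := hsum.comp_injective Sum.inr_injective
  rw [tsum_eq_tsum_add_tsum_of_isCompl_range hdiag hoff hcompl hf]
  congr 1
  exact ((tsum_eq_tsum_add_tsum_of_isCompl_range Sum.inl_injective Sum.inr_injective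
    Set.isCompl_range_inl_range_inr hsum).trans (hbelow.tsum_add habove).symm)

lemma eq_apply_zero_of_apply_sq_eq {R X : Type*} [SeminormedRing R] [TopologicalSpace X]
    [T2Space X] {f : R → X} (hf : ContinuousAt f 0) (hsq : ∀ z, ‖z‖ < 1 → f (z ^ 2) = f z)
    {z : R} (hz : ‖z‖ < 1) : f z = f 0 := by
  have hiter (n : ℕ) : f (z ^ 2 ^ n) = f z := by
    induction n with
    | zero => simp
    | succ n ih =>
      rw [pow_succ 2 n, pow_mul, hsq _ ?_, ih]
      exact (norm_pow_le' z (by positivity)).trans_lt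
        (pow_lt_one₀ (norm_nonneg z) hz (by positivity))
  have hlim : Tendsto (fun n : ℕ => z ^ 2 ^ n) atTop (𝓝 0) :=
    (tendsto_pow_atTop_nhds_zero_of_norm_lt_one hz).comp
      (tendsto_pow_atTop_atTop_of_one_lt one_lt_two)
  exact tendsto_nhds_unique (tendsto_const_nhds.congr fun n => (hiter n).symm)
    (hf.tendsto.comp hlim)

lemma summable_abs_pow_mul_zpow {r : ℝ} (hr₀ : 0 < r) (hr₁ : r < 1) (k : ℕ) {e : ℤ → ℤ}
    (he : ∀ n, |n| ≤ e n + 1) : Summable fun n : ℤ => |(n : ℝ)| ^ k * r ^ e n := by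
  have hgeom : Summable fun n : ℤ => |(n : ℝ)| ^ k * r ^ |n| := by
    have hnat : Summable fun n : ℕ => (n : ℝ) ^ k * r ^ n :=
      summable_pow_mul_geometric_of_norm_lt_one k (by rwa [Real.norm_of_nonneg hr₀.le])
    exact .of_nat_of_neg (by simpa using hnat) (by simpa using hnat)
  refine .of_nonneg_of_le (fun n => by positivity) (fun n => ?_) (hgeom.mul_left r⁻¹)
  calc |(n : ℝ)| ^ k * r ^ e n ≤ |(n : ℝ)| ^ k * r ^ (|n| - 1) := by
        gcongr ?_ * ?_
        exact zpow_le_zpow_right_of_le_one₀ hr₀ hr₁.le (by linarith [he n])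
    _ = r⁻¹ * (|(n : ℝ)| ^ k * r ^ |n|) := by rw [zpow_sub_one₀ hr₀.ne']; ring

lemma summable_norm_pow_mul_zpow {q : ℂ} (hq₀ : q ≠ 0) (hq : ‖q‖ < 1) (k : ℕ) {e : ℤ → ℤ}
    (he : ∀ n, |n| ≤ e n + 1) : Summable fun n : ℤ => ‖(n : ℂ) ^ k * q ^ e n‖ := by
  simpa using summable_abs_pow_mul_zpow (norm_pos_iff.mpr hq₀) hq k he

end General

/-! ### The Euler product -/

section EulerProduct

variable {q : ℂ}

lemma norm_pow_lt_one (hq : ‖q‖ < 1) {k : ℕ} (hk : k ≠ 0) : ‖q ^ k‖ < 1 := by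
  simpa using pow_lt_one₀ (norm_nonneg q) hq hk

lemma one_sub_pow_ne_zero (hq : ‖q‖ < 1) {k : ℕ} (hk : k ≠ 0) : 1 - q ^ k ≠ 0 := fun h =>
  (norm_pow_lt_one hq hk).ne (by rw [← sub_eq_zero.mp h, norm_one])

lemma summable_norm_pow_add_one (hq : ‖q‖ < 1) : Summable fun n : ℕ => ‖q ^ (n + 1)‖ := by
  simpa using (summable_nat_add_iff 1).mpr (summable_geometric_of_lt_one (norm_nonneg q) hq)

lemma eulerF_ne_zero (hq : ‖q‖ < 1) : eulerF q ≠ 0 := by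
  simpa [eulerF, sub_eq_add_neg] using tprod_one_add_ne_zero_of_summable
    (f := fun n : ℕ => -q ^ (n + 1))
    (fun n => by simpa [sub_eq_add_neg] using one_sub_pow_ne_zero hq n.succ_ne_zero)
    (by simpa using summable_norm_pow_add_one hq)

lemma tendsto_prod_range_eulerF (hq : ‖q‖ < 1) :
    Tendsto (fun N => ∏ k ∈ range N, (1 - q ^ (k + 1))) atTop (𝓝 (eulerF q)) :=
  (ModularForm.multipliable_one_sub_pow hq).hasProd.tendsto_prod_nat

lemma multipliable_one_add_pow (hq : ‖q‖ < 1) : Multipliable fun k : ℕ => 1 + q ^ (k + 1) :=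
  multipliable_one_add_of_summable (summable_norm_pow_add_one hq)

lemma tprod_one_add_pow_mul_eulerF (hq : ‖q‖ < 1) :
    (∏' k : ℕ, (1 + q ^ (k + 1))) * eulerF q = eulerF (q ^ 2) := by
  rw [eulerF, eulerF, ← (multipliable_one_add_pow hq).tprod_mul
    (ModularForm.multipliable_one_sub_pow hq)]
  exact tprod_congr fun k => by ring

lemma multipliable_one_sub_pow_comp (hq : ‖q‖ < 1) {e : ℕ → ℕ} (he : e.Injective) :
    Multipliable fun k => 1 - q ^ (e k + 1) := by
  have hsum : Summable fun k => ‖-q ^ (e k + 1)‖ := by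
    simpa [Function.comp_def] using (summable_norm_pow_add_one hq).comp_injective he
  simpa [sub_eq_add_neg] using multipliable_one_add_of_summable hsum

lemma multipliable_one_sub_pow_odd (hq : ‖q‖ < 1) :
    Multipliable fun k : ℕ => 1 - q ^ (2 * k + 1) :=
  multipliable_one_sub_pow_comp hq (mul_right_injective₀ two_ne_zero)

/-- The product `∏_{n ≥ 0} (1 - q ^ (2 n + 1))`, the part of the Euler product over odd
exponents. -/
noncomputable def eulerOdd (q : ℂ) : ℂ := ∏' k : ℕ, (1 - q ^ (2 * k + 1))

lemma multipliable_one_sub_pow_odd_add_two (hq : ‖q‖ < 1) :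
    Multipliable fun k : ℕ => 1 - q ^ (2 * (k + 1) + 1) :=
  multipliable_one_sub_pow_comp hq ((mul_right_injective₀ two_ne_zero).comp (add_left_injective 1))

lemma eulerOdd_eq_one_sub_mul_tprod (hq : ‖q‖ < 1) :
    eulerOdd q = (1 - q) * ∏' k : ℕ, (1 - q ^ (2 * (k + 1) + 1)) := by
  simpa [eulerOdd] using tprod_eq_zero_mul' (f := fun k : ℕ => 1 - q ^ (2 * k + 1))
    (multipliable_one_sub_pow_odd_add_two hq)

lemma eulerOdd_mul_eulerF_sq (hq : ‖q‖ < 1) : eulerOdd q * eulerF (q ^ 2) = eulerF q := by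
  have heven (k : ℕ) : 1 - (q ^ 2) ^ (k + 1) = 1 - q ^ (2 * k + 1 + 1) := by ring
  simp only [eulerOdd, eulerF, heven]
  refine tprod_even_mul_odd (f := fun n : ℕ => 1 - q ^ (n + 1)) (multipliable_one_sub_pow_odd hq) ?_
  simpa only [← heven] using ModularForm.multipliable_one_sub_pow (norm_pow_lt_one hq two_ne_zero)

lemma eulerOdd_mul_eulerOdd_neg (hq : ‖q‖ < 1) : eulerOdd q * eulerOdd (-q) = eulerOdd (q ^ 2) := by
  rw [eulerOdd, eulerOdd, eulerOdd, ← (multipliable_one_sub_pow_odd hq).tprod_mul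
    (multipliable_one_sub_pow_odd (by rwa [norm_neg]))]
  refine tprod_congr fun k => ?_
  rw [(odd_two_mul_add_one k).neg_pow]
  ring

lemma eulerF_mul_eulerF_neg (hq : ‖q‖ < 1) :
    eulerF q * eulerF (-q) * eulerF (q ^ 4) = eulerF (q ^ 2) ^ 3 := by
  have hpos := eulerOdd_mul_eulerF_sq hq
  have hneg := eulerOdd_mul_eulerF_sq (q := -q) (by rwa [norm_neg])
  have hsq := eulerOdd_mul_eulerF_sq (norm_pow_lt_one hq two_ne_zero)
  rw [neg_sq] at hneg
  rw [← pow_mul] at hsq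
  calc eulerF q * eulerF (-q) * eulerF (q ^ 4)
      = eulerOdd q * eulerOdd (-q) * eulerF (q ^ 4) * eulerF (q ^ 2) ^ 2 := by
        rw [← hpos, ← hneg]; ring
    _ = eulerF (q ^ 2) ^ 3 := by rw [eulerOdd_mul_eulerOdd_neg hq, hsq]; ring

end EulerProduct

/-! ### The Jacobi triple product -/

section TripleProduct

variable {p q : ℂ}

/-- The reciprocal `1 / ((1 - p) ⋯ (1 - p ^ m))` of a `q`-Pochhammer symbol, set to be zero at
negative `m` so that the recursion `recipEuler_sub_one` holds at all integers. -/
noncomputable def recipEuler (p : ℂ) (m : ℤ) : ℂ :=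
  if 0 ≤ m then (∏ k ∈ range m.toNat, (1 - p ^ (k + 1)))⁻¹ else 0

lemma recipEuler_natCast (p : ℂ) (m : ℕ) :
    recipEuler p m = (∏ k ∈ range m, (1 - p ^ (k + 1)))⁻¹ := by
  simp [recipEuler]

lemma recipEuler_of_neg (p : ℂ) {m : ℤ} (hm : m < 0) : recipEuler p m = 0 :=
  if_neg hm.not_ge

lemma recipEuler_sub_one (hp : ‖p‖ < 1) (m : ℤ) :
    recipEuler p (m - 1) = (1 - p ^ m) * recipEuler p m := by
  rcases lt_trichotomy m 0 with hm | rfl | hm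
  · rw [recipEuler_of_neg p hm, recipEuler_of_neg p (by lia), mul_zero]
  · simp [recipEuler_of_neg]
  · obtain ⟨k, rfl⟩ : ∃ k : ℕ, m = k + 1 := ⟨(m - 1).toNat, by lia⟩
    have hk := one_sub_pow_ne_zero hp k.succ_ne_zero
    rw [add_sub_cancel_right, recipEuler_natCast, ← Nat.cast_succ, recipEuler_natCast,
      prod_range_succ, zpow_natCast]
    field_simp

lemma tendsto_recipEuler (hp : ‖p‖ < 1) : Tendsto (recipEuler p) atTop (𝓝 (eulerF p)⁻¹) := by
  have hnat : Tendsto (fun m : ℕ => recipEuler p m) atTop (𝓝 (eulerF p)⁻¹) := by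
    simpa only [recipEuler_natCast] using (tendsto_prod_range_eulerF hp).inv₀ (eulerF_ne_zero hp)
  have htoNat : Tendsto Int.toNat atTop atTop :=
    tendsto_atTop_atTop.mpr fun b => ⟨b, fun a ha => by lia⟩
  refine (hnat.comp htoNat).congr' ?_
  filter_upwards [eventually_ge_atTop 0] with m hm
  simp [Int.toNat_of_nonneg hm]

lemma exists_norm_recipEuler_le (hp : ‖p‖ < 1) : ∃ C, ∀ m, ‖recipEuler p m‖ ≤ C := by
  obtain ⟨C, hC⟩ := (((tendsto_recipEuler hp).comp tendsto_natCast_atTop_atTop).norm).bddAbove_range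
  refine ⟨C, fun m => ?_⟩
  have hbound (k : ℕ) : ‖recipEuler p k‖ ≤ C := hC ⟨k, rfl⟩
  rcases lt_or_ge m 0 with hm | hm
  · rw [recipEuler_of_neg p hm, norm_zero]
    exact (norm_nonneg _).trans (hbound 0)
  · lift m to ℕ using hm
    exact hbound m

/-- The coefficient `[2N+1 choose N-n] q ^ (n (n + 1))` (a Gaussian binomial coefficient in base
`q ^ 2`) of the finite form of the Jacobi triple product. -/
noncomputable def jacobiCoeff (q : ℂ) (N : ℕ) (n : ℤ) : ℂ :=
  (∏ k ∈ range (2 * N + 1), (1 - (q ^ 2) ^ (k + 1))) * recipEuler (q ^ 2) (N - n)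
    * recipEuler (q ^ 2) (N + n + 1) * q ^ (n * (n + 1))

lemma jacobiCoeff_eq_zero (q : ℂ) {N : ℕ} {n : ℤ} (hn : n ∉ Icc (-(N + 1) : ℤ) N) :
    jacobiCoeff q N n = 0 := by
  rw [mem_Icc, not_and_or, not_le, not_le] at hn
  rcases hn with hn | hn
  · simp [jacobiCoeff, recipEuler_of_neg (q ^ 2) (show (N : ℤ) + n + 1 < 0 by lia)]
  · simp [jacobiCoeff, recipEuler_of_neg (q ^ 2) (show (N : ℤ) - n < 0 by lia)]

lemma summable_jacobiCoeff_mul (q : ℂ) (N : ℕ) (V : ℤ → ℂ) :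
    Summable fun n => jacobiCoeff q N n * V n :=
  summable_of_ne_finset_zero (s := Icc (-(N + 1) : ℤ) N) fun n hn => by
    rw [jacobiCoeff_eq_zero q hn, zero_mul]

lemma jacobiCoeff_zero (hq : ‖q‖ < 1) {n : ℤ} (hn : n ∈ Icc (-1 : ℤ) 0) :
    jacobiCoeff q 0 n = 1 := by
  have hne : 1 - q ^ 2 ≠ 0 := one_sub_pow_ne_zero hq two_ne_zero
  obtain rfl | rfl : n = -1 ∨ n = 0 := by rw [mem_Icc] at hn; lia
  · simp [jacobiCoeff, recipEuler, hne]
  · simp [jacobiCoeff, recipEuler, hne]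

-- Both sides are multiples of `recipEuler (N + 1 - n) * recipEuler (N + n + 2)`.
lemma jacobiCoeff_succ (hq₀ : q ≠ 0) (hq : ‖q‖ < 1) (N : ℕ) (n : ℤ) :
    jacobiCoeff q (N + 1) n = (1 + q ^ (4 * (N + 1))) * jacobiCoeff q N n
      + q ^ (2 * (N + 1)) * (jacobiCoeff q N (n - 1) + jacobiCoeff q N (n + 1)) := by
  have hp := norm_pow_lt_one hq two_ne_zero
  have hp₀ : q ^ 2 ≠ 0 := pow_ne_zero 2 hq₀
  have hA := recipEuler_sub_one hp (N + 1 - n)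
  have hA' := recipEuler_sub_one hp (N - n)
  have hB := recipEuler_sub_one hp (N + n + 2)
  have hB' := recipEuler_sub_one hp (N + n + 1)
  rw [show (N + 1 - n - 1 : ℤ) = N - n by ring] at hA
  rw [show (N + n + 2 - 1 : ℤ) = N + n + 1 by ring] at hB
  rw [show (N + n + 1 - 1 : ℤ) = N + n by ring] at hB'
  have hprev : q ^ ((n - 1) * (n - 1 + 1)) = q ^ (n * (n + 1)) * ((q ^ 2) ^ n)⁻¹ := by
    rw [← zpow_natCast, ← zpow_mul, ← zpow_neg, ← zpow_add₀ hq₀]; push_cast; congr 1; ring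
  have hnext : q ^ ((n + 1) * (n + 1 + 1)) = q ^ (n * (n + 1)) * ((q ^ 2) ^ n * q ^ 2) := by
    rw [← zpow_add_one₀ hp₀, ← zpow_natCast q 2, ← zpow_mul, ← zpow_add₀ hq₀]
    push_cast; congr 1; ring
  simp only [jacobiCoeff]
  rw [hprev, hnext, show (N - (n - 1) : ℤ) = N + 1 - n by ring,
    show (N + (n - 1) + 1 : ℤ) = N + n by ring, show (N - (n + 1) : ℤ) = N - n - 1 by ring,
    show (N + (n + 1) + 1 : ℤ) = N + n + 2 by ring, hA', hB', hA, hB,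
    show 2 * (N + 1) + 1 = 2 * N + 1 + 1 + 1 by ring, prod_range_succ, prod_range_succ]
  push_cast
  rw [show (N + 1 + n + 1 : ℤ) = N + n + 2 by ring]
  have hu : (q ^ 2) ^ n ≠ 0 := zpow_ne_zero n hp₀
  simp only [zpow_sub₀ hp₀, zpow_add₀ hp₀, zpow_natCast, zpow_ofNat]
  field_simp
  ring

lemma tsum_jacobiCoeff_succ_mul (hq₀ : q ≠ 0) (hq : ‖q‖ < 1) (V : ℤ → ℂ) (N : ℕ) :
    ∑' n, jacobiCoeff q (N + 1) n * V n
      = (1 + q ^ (4 * (N + 1))) * ∑' n, jacobiCoeff q N n * V n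
        + q ^ (2 * (N + 1)) * ∑' n, jacobiCoeff q N n * (V (n + 1) + V (n - 1)) := by
  let b := jacobiCoeff q N
  have hb := summable_jacobiCoeff_mul q N
  have hleft : ∑' n, b (n - 1) * V n = ∑' n, b n * V (n + 1) := by
    simpa using (Equiv.subRight (1 : ℤ)).tsum_eq fun n => b n * V (n + 1)
  have hright : ∑' n, b (n + 1) * V n = ∑' n, b n * V (n - 1) := by
    simpa using (Equiv.addRight (1 : ℤ)).tsum_eq fun n => b n * V (n - 1)
  have hsleft : Summable fun n => b (n - 1) * V n := by
    simpa [b, Function.comp_def] using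
      (Equiv.subRight (1 : ℤ)).summable_iff.mpr (hb fun n => V (n + 1))
  have hsright : Summable fun n => b (n + 1) * V n := by
    simpa [b, Function.comp_def] using
      (Equiv.addRight (1 : ℤ)).summable_iff.mpr (hb fun n => V (n - 1))
  calc ∑' n, jacobiCoeff q (N + 1) n * V n
      = ∑' n, ((1 + q ^ (4 * (N + 1))) * (b n * V n)
          + q ^ (2 * (N + 1)) * (b (n - 1) * V n + b (n + 1) * V n)) :=
        tsum_congr fun n => by rw [jacobiCoeff_succ hq₀ hq]; ring
    _ = (1 + q ^ (4 * (N + 1))) * ∑' n, b n * V n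
          + q ^ (2 * (N + 1)) * (∑' n, b n * V (n + 1) + ∑' n, b n * V (n - 1)) := by
        rw [((hb V).mul_left _).tsum_add ((hsleft.add hsright).mul_left _), tsum_mul_left,
          tsum_mul_left, hsleft.tsum_add hsright, hleft, hright]
    _ = _ := by
        simp only [mul_add (jacobiCoeff q N _)]
        rw [(hb _).tsum_add (hb _)]

lemma tsum_jacobiCoeff_mul (hq₀ : q ≠ 0) (hq : ‖q‖ < 1) {V : ℤ → ℂ} {y : ℂ}
    (hV : ∀ n, V (n + 1) + V (n - 1) = y * V n) (N : ℕ) :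
    ∑' n, jacobiCoeff q N n * V n
      = (V 0 + V (-1)) * ∏ k ∈ range N, (1 + y * q ^ (2 * (k + 1)) + q ^ (4 * (k + 1))) := by
  induction N with
  | zero =>
    have hIcc : Icc (-((0 : ℕ) + 1) : ℤ) (0 : ℕ) = {-1, 0} := by decide
    rw [tsum_eq_sum fun n hn => by rw [jacobiCoeff_eq_zero q hn, zero_mul], hIcc,
      sum_pair (by decide), jacobiCoeff_zero hq (by decide), jacobiCoeff_zero hq (by decide)]
    simp [add_comm]
  | succ N ih =>
    simp only [tsum_jacobiCoeff_succ_mul hq₀ hq, hV, mul_left_comm _ y, tsum_mul_left, ih,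
      prod_range_succ]
    ring

lemma tendsto_jacobiCoeff (hq : ‖q‖ < 1) (n : ℤ) :
    Tendsto (jacobiCoeff q · n) atTop (𝓝 ((eulerF (q ^ 2))⁻¹ * q ^ (n * (n + 1)))) := by
  have hp := norm_pow_lt_one hq two_ne_zero
  have hprod : Tendsto (fun N : ℕ => ∏ k ∈ range (2 * N + 1), (1 - (q ^ 2) ^ (k + 1))) atTop
      (𝓝 (eulerF (q ^ 2))) :=
    (tendsto_prod_range_eulerF hp).comp
      (tendsto_atTop_mono (fun N => show N ≤ 2 * N + 1 by lia) tendsto_id)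
  have hsub : Tendsto (fun N : ℕ => (N : ℤ) - n) atTop atTop :=
    tendsto_atTop_add_const_right _ (-n) tendsto_natCast_atTop_atTop
  have hadd : Tendsto (fun N : ℕ => (N : ℤ) + n + 1) atTop atTop :=
    tendsto_atTop_add_const_right _ 1
      (tendsto_atTop_add_const_right _ n tendsto_natCast_atTop_atTop)
  have hlim := ((hprod.mul ((tendsto_recipEuler hp).comp hsub)).mul
    ((tendsto_recipEuler hp).comp hadd)).mul_const (q ^ (n * (n + 1)))
  rwa [mul_inv_cancel₀ (eulerF_ne_zero hp), one_mul] at hlim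

lemma exists_norm_jacobiCoeff_le (hq : ‖q‖ < 1) :
    ∃ C, ∀ N n, ‖jacobiCoeff q N n‖ ≤ C * ‖q ^ (n * (n + 1))‖ := by
  have hp := norm_pow_lt_one hq two_ne_zero
  obtain ⟨A, hA⟩ := (tendsto_prod_range_eulerF hp).norm.bddAbove_range
  obtain ⟨B, hB⟩ := exists_norm_recipEuler_le hp
  have hA' (N : ℕ) : ‖∏ k ∈ range N, (1 - (q ^ 2) ^ (k + 1))‖ ≤ A := hA ⟨N, rfl⟩
  have hA₀ : 0 ≤ A := (norm_nonneg _).trans (hA' 0)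
  have hB₀ : 0 ≤ B := (norm_nonneg _).trans (hB 0)
  refine ⟨A * B * B, fun N n => ?_⟩
  rw [jacobiCoeff, norm_mul, norm_mul, norm_mul]
  gcongr
  exacts [hA' _, hB _, hB _]

/-- The Jacobi triple product, in a form free of the variable `z`: the sequence `V` plays the role
of `z ^ n` and `y` that of `z + z⁻¹`. Other solutions `V` of the same recurrence give the
degenerate specialisations at `z = ± 1`. -/
theorem tsum_zpow_mul_eq_eulerF_mul_tprod (hq₀ : q ≠ 0) (hq : ‖q‖ < 1) {V : ℤ → ℂ} {y : ℂ}
    (hV : ∀ n, V (n + 1) + V (n - 1) = y * V n)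
    (hsum : Summable fun n : ℤ => ‖q ^ (n * (n + 1)) * V n‖) :
    ∑' n : ℤ, q ^ (n * (n + 1)) * V n
      = (V 0 + V (-1)) * eulerF (q ^ 2)
        * ∏' k : ℕ, (1 + y * q ^ (2 * (k + 1)) + q ^ (4 * (k + 1))) := by
  obtain ⟨C, hC⟩ := exists_norm_jacobiCoeff_le hq
  have hF := eulerF_ne_zero (norm_pow_lt_one hq two_ne_zero)
  have hseries : Tendsto (fun N => ∑' n, jacobiCoeff q N n * V n) atTop
      (𝓝 (∑' n : ℤ, (eulerF (q ^ 2))⁻¹ * q ^ (n * (n + 1)) * V n)) := by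
    refine tendsto_tsum_of_dominated_convergence (hsum.mul_left C)
      (fun n => (tendsto_jacobiCoeff hq n).mul_const _) (.of_forall fun N n => ?_)
    rw [norm_mul, norm_mul, ← mul_assoc]
    gcongr
    exact hC N n
  have hmult : Multipliable fun k : ℕ => 1 + y * q ^ (2 * (k + 1)) + q ^ (4 * (k + 1)) := by
    simp only [add_assoc]
    have hdom := ((summable_norm_pow_add_one (norm_pow_lt_one hq two_ne_zero)).mul_left ‖y‖).add
      (summable_norm_pow_add_one (norm_pow_lt_one hq four_ne_zero))
    refine multipliable_one_add_of_summable (.of_nonneg_of_le (fun k => norm_nonneg _)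
      (fun k => (norm_add_le _ _).trans_eq ?_) hdom)
    rw [norm_mul, pow_mul, pow_mul]
  have hprod := hmult.hasProd.tendsto_prod_nat.const_mul (V 0 + V (-1))
  simp only [tsum_jacobiCoeff_mul hq₀ hq hV] at hseries
  have hlim := tendsto_nhds_unique hseries hprod
  simp only [mul_assoc, tsum_mul_left] at hlim ⊢
  rw [inv_mul_eq_iff_eq_mul₀ hF] at hlim
  rw [hlim]
  ring

end TripleProduct

/-! ### Theta series -/

section Theta

variable {q : ℂ}

/-- Jacobi's theta series `∑ q ^ (n ^ 2)` over the integers, as a function of the nome. -/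
noncomputable def theta (q : ℂ) : ℂ := ∑' n : ℤ, q ^ n ^ 2

/-- The theta series `∑ q ^ (n (n + 1))` over the integers, which is `q ^ (-1 / 4)` times Jacobi's
`θ₂` and twice Ramanujan's `ψ (q ^ 2)`. -/
noncomputable def psi (q : ℂ) : ℂ := ∑' n : ℤ, q ^ (n * (n + 1))

lemma abs_le_sq_add_one (n : ℤ) : |n| ≤ n ^ 2 + 1 := by
  nlinarith [sq_abs n, sq_nonneg (|n| - 1), abs_nonneg n]

lemma abs_le_mul_add_one_add_one (n : ℤ) : |n| ≤ n * (n + 1) + 1 :=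
  abs_le.mpr ⟨by nlinarith [sq_nonneg (n + 1)], by nlinarith [sq_nonneg n]⟩

lemma summable_norm_zpow_sq (hq₀ : q ≠ 0) (hq : ‖q‖ < 1) : Summable fun n : ℤ => ‖q ^ n ^ 2‖ := by
  simpa using summable_norm_pow_mul_zpow hq₀ hq 0 abs_le_sq_add_one

lemma summable_norm_zpow_mul_add_one (hq₀ : q ≠ 0) (hq : ‖q‖ < 1) :
    Summable fun n : ℤ => ‖q ^ (n * (n + 1))‖ := by
  simpa using summable_norm_pow_mul_zpow hq₀ hq 0 abs_le_mul_add_one_add_one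

lemma summable_norm_sign_mul_two_mul_add_one_mul_zpow (hq₀ : q ≠ 0) (hq : ‖q‖ < 1) :
    Summable fun n : ℤ => ‖q ^ (n * (n + 1)) * ((-1) ^ n * (2 * n + 1))‖ := by
  have hlin := summable_norm_pow_mul_zpow hq₀ hq 1 abs_le_mul_add_one_add_one
  refine .of_nonneg_of_le (fun n => norm_nonneg _) (fun n => ?_)
    ((hlin.mul_left 2).add (summable_norm_zpow_mul_add_one hq₀ hq))
  have hodd : ‖(2 * n + 1 : ℂ)‖ ≤ 2 * ‖(n : ℂ)‖ + 1 :=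
    (norm_add_le _ _).trans_eq (by simp)
  rw [norm_mul, norm_mul, norm_zpow (-1 : ℂ), norm_neg, norm_one, one_zpow, one_mul, norm_mul,
    pow_one]
  nlinarith [norm_nonneg (q ^ (n * (n + 1)))]

lemma psi_mul_eulerF (hq₀ : q ≠ 0) (hq : ‖q‖ < 1) :
    psi q * eulerF (q ^ 2) = 2 * eulerF (q ^ 4) ^ 2 := by
  have hp := norm_pow_lt_one hq two_ne_zero
  have hJ := tsum_zpow_mul_eq_eulerF_mul_tprod hq₀ hq (V := fun _ => 1) (y := 2)
    (fun _ => by norm_num) (by simpa using summable_norm_zpow_mul_add_one hq₀ hq)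
  have hsq : ∏' k : ℕ, (1 + 2 * q ^ (2 * (k + 1)) + q ^ (4 * (k + 1)))
      = (∏' k : ℕ, (1 + (q ^ 2) ^ (k + 1))) ^ 2 := by
    rw [← (multipliable_one_add_pow hp).tprod_pow]
    exact tprod_congr fun k => by ring
  have hdouble := tprod_one_add_pow_mul_eulerF hp
  rw [← pow_mul] at hdouble
  simp only [mul_one] at hJ
  rw [psi, hJ, hsq, ← hdouble]
  ring

lemma tsum_sign_mul_two_mul_add_one_mul_zpow (hq₀ : q ≠ 0) (hq : ‖q‖ < 1) :
    ∑' n : ℤ, q ^ (n * (n + 1)) * ((-1) ^ n * (2 * n + 1)) = 2 * eulerF (q ^ 2) ^ 3 := by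
  have hp := norm_pow_lt_one hq two_ne_zero
  have hJ := tsum_zpow_mul_eq_eulerF_mul_tprod hq₀ hq
    (V := fun n => (-1) ^ n * (2 * n + 1)) (y := -2) (fun n => ?_)
    (summable_norm_sign_mul_two_mul_add_one_mul_zpow hq₀ hq)
  · have hsq : ∏' k : ℕ, (1 + -2 * q ^ (2 * (k + 1)) + q ^ (4 * (k + 1)))
        = eulerF (q ^ 2) ^ 2 := by
      rw [eulerF, ← (ModularForm.multipliable_one_sub_pow hp).tprod_pow]
      exact tprod_congr fun k => by ring
    rw [hJ, hsq]
    simp only [Int.cast_zero, Int.cast_neg, Int.cast_one, zpow_zero, zpow_neg_one, inv_neg, inv_one]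
    ring
  · rw [zpow_add_one₀ (by norm_num), zpow_sub_one₀ (by norm_num)]
    push_cast
    ring

lemma neg_zpow_sq (q : ℂ) (n : ℤ) : (-q) ^ n ^ 2 = (-1) ^ n * q ^ n ^ 2 := by
  rw [neg_eq_neg_one_mul, mul_zpow, sq n, zpow_mul]
  rcases n.even_or_odd with hn | hn
  · simp [hn.neg_one_zpow]
  · simp [hn.neg_one_zpow]

lemma theta_neg (q : ℂ) : theta (-q) = ∑' n : ℤ, (-1) ^ n * q ^ n ^ 2 := by
  simp only [theta, neg_zpow_sq]

lemma theta_neg_mul_eulerF (hq₀ : q ≠ 0) (hq : ‖q‖ < 1) :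
    theta (-q) * eulerF (q ^ 2) = eulerF q ^ 2 := by
  have hterm (n : ℤ) : q ^ (n * (n + 1)) * (-q⁻¹) ^ n = (-1) ^ n * q ^ n ^ 2 := by
    rw [neg_eq_neg_one_mul, mul_zpow, inv_zpow', mul_left_comm, ← zpow_add₀ hq₀]
    congr 2
    ring
  have hJ := tsum_zpow_mul_eq_eulerF_mul_tprod hq₀ hq (V := fun n => (-q⁻¹) ^ n)
    (y := -(q + q⁻¹)) (fun n => ?_) (by simpa [hterm] using summable_norm_zpow_sq hq₀ hq)
  · have hfactor : ∏' k : ℕ, (1 + -(q + q⁻¹) * q ^ (2 * (k + 1)) + q ^ (4 * (k + 1)))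
        = eulerOdd q * ∏' k : ℕ, (1 - q ^ (2 * (k + 1) + 1)) := by
      rw [eulerOdd, ← (multipliable_one_sub_pow_odd hq).tprod_mul
        (multipliable_one_sub_pow_odd_add_two hq)]
      refine tprod_congr fun k => ?_
      field_simp
      ring
    simp only [hterm] at hJ
    rw [theta_neg, hJ, hfactor, ← eulerOdd_mul_eulerF_sq hq]
    simp only [zpow_zero, zpow_neg_one, inv_neg, inv_inv]
    linear_combination
      -eulerOdd q * eulerF (q ^ 2) ^ 2 * eulerOdd_eq_one_sub_mul_tprod hq
  · have hne : -q⁻¹ ≠ 0 := neg_ne_zero.mpr (inv_ne_zero hq₀)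
    rw [zpow_add_one₀ hne, zpow_sub_one₀ hne, inv_neg, inv_inv]
    ring

lemma theta_mul_theta_neg (hq₀ : q ≠ 0) (hq : ‖q‖ < 1) :
    theta q * theta (-q) * eulerF (q ^ 4) ^ 2 = eulerF (q ^ 2) ^ 4 := by
  have hpos := theta_neg_mul_eulerF (neg_ne_zero.mpr hq₀) (by rwa [norm_neg])
  have hneg := theta_neg_mul_eulerF hq₀ hq
  rw [neg_neg, neg_sq] at hpos
  have hF := eulerF_ne_zero (norm_pow_lt_one hq two_ne_zero)
  refine mul_right_cancel₀ (pow_ne_zero 2 hF) ?_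
  calc theta q * theta (-q) * eulerF (q ^ 4) ^ 2 * eulerF (q ^ 2) ^ 2
      = (eulerF q * eulerF (-q) * eulerF (q ^ 4)) ^ 2 := by
        linear_combination eulerF (q ^ 4) ^ 2
          * (theta (-q) * eulerF (q ^ 2) * hpos + eulerF (-q) ^ 2 * hneg)
    _ = eulerF (q ^ 2) ^ 4 * eulerF (q ^ 2) ^ 2 := by rw [eulerF_mul_eulerF_neg hq]; ring

lemma psi_sq (hq₀ : q ≠ 0) (hq : ‖q‖ < 1) : psi q ^ 2 = 2 * psi (q ^ 2) * theta (q ^ 2) := by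
  have hp₀ : q ^ 2 ≠ 0 := pow_ne_zero 2 hq₀
  have hp := norm_pow_lt_one hq two_ne_zero
  have hpsi := psi_mul_eulerF hq₀ hq
  have hpsi' := psi_mul_eulerF hp₀ hp
  have htheta := theta_neg_mul_eulerF (neg_ne_zero.mpr hp₀) (by rwa [norm_neg])
  have hF := eulerF_mul_eulerF_neg hp
  simp only [neg_neg, neg_sq, ← pow_mul, Nat.reduceMul] at hpsi' htheta hF
  have hF₂ := eulerF_ne_zero hp
  have hF₄ := eulerF_ne_zero (norm_pow_lt_one hq four_ne_zero)
  refine mul_right_cancel₀ (mul_ne_zero (pow_ne_zero 2 hF₂) (pow_ne_zero 2 hF₄)) ?_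
  calc psi q ^ 2 * (eulerF (q ^ 2) ^ 2 * eulerF (q ^ 4) ^ 2)
      = 4 * (eulerF (q ^ 4) ^ 3) ^ 2 := by
        linear_combination eulerF (q ^ 4) ^ 2
          * (psi q * eulerF (q ^ 2) + 2 * eulerF (q ^ 4) ^ 2) * hpsi
    _ = 2 * (2 * eulerF (q ^ 8) ^ 2) * eulerF (-q ^ 2) ^ 2 * eulerF (q ^ 2) ^ 2 := by
        rw [← hF]; ring
    _ = 2 * psi (q ^ 2) * theta (q ^ 2) * (eulerF (q ^ 2) ^ 2 * eulerF (q ^ 4) ^ 2) := by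
        rw [← hpsi', ← htheta]; ring

lemma theta_sq (hq₀ : q ≠ 0) (hq : ‖q‖ < 1) :
    theta q ^ 2 = theta (q ^ 2) ^ 2 + q * psi (q ^ 2) ^ 2 := by
  have hp₀ : q ^ 2 ≠ 0 := pow_ne_zero 2 hq₀
  have hp := norm_pow_lt_one hq two_ne_zero
  have hθ := summable_norm_zpow_sq hq₀ hq
  have hθ₂ := summable_norm_zpow_sq hp₀ hp
  have hψ₂ := summable_norm_zpow_mul_add_one hp₀ hp
  rw [sq (theta q), sq (theta _), sq (psi _), theta, theta, psi,
    tsum_mul_tsum_eq_tsum_rotate_add hθ hθ, tsum_mul_tsum_of_summable_norm hθ₂ hθ₂,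
    tsum_mul_tsum_of_summable_norm hψ₂ hψ₂, ← tsum_mul_left]
  congr 1 <;> refine tsum_congr fun c => ?_
  · simp only [← zpow_natCast q 2, ← zpow_mul, ← zpow_add₀ hq₀]
    congr 1
    push_cast
    ring
  · simp only [← zpow_natCast q 2, ← zpow_mul, ← zpow_add₀ hq₀, ← zpow_one_add₀ hq₀]
    congr 1
    push_cast
    ring

/-- Jacobi's *aequatio identica satis abstrusa*. -/
theorem theta_pow_four_sub_theta_neg_pow_four (hq₀ : q ≠ 0) (hq : ‖q‖ < 1) :
    theta q ^ 4 - theta (-q) ^ 4 = q * psi q ^ 4 := by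
  have hpos := theta_sq hq₀ hq
  have hneg := theta_sq (neg_ne_zero.mpr hq₀) (by rwa [norm_neg])
  rw [neg_sq] at hneg
  calc theta q ^ 4 - theta (-q) ^ 4 = (theta q ^ 2) ^ 2 - (theta (-q) ^ 2) ^ 2 := by ring
    _ = q * (2 * psi (q ^ 2) * theta (q ^ 2)) ^ 2 := by rw [hpos, hneg]; ring
    _ = q * psi q ^ 4 := by rw [← psi_sq hq₀ hq]; ring

lemma norm_zpow_sq_le {z : ℂ} {r : ℝ} (hz : ‖z‖ ≤ r) (n : ℤ) : ‖z ^ n ^ 2‖ ≤ r ^ n ^ 2 := by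
  rw [norm_zpow]
  exact zpow_le_zpow_left₀ (sq_nonneg n) (norm_nonneg z) hz

lemma differentiableOn_zpow_sq (n : ℤ) (s : Set ℂ) :
    DifferentiableOn ℂ (fun z : ℂ => z ^ n ^ 2) s :=
  differentiableOn_id.zpow (Or.inr (sq_nonneg n))

lemma summable_zpow_sq {r : ℝ} (hr₀ : 0 < r) (hr : r < 1) : Summable fun n : ℤ => r ^ n ^ 2 := by
  simpa using summable_abs_pow_mul_zpow hr₀ hr 0 abs_le_sq_add_one

lemma differentiableAt_theta (hq : ‖q‖ < 1) : DifferentiableAt ℂ theta q := by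
  obtain ⟨r, hqr, hr⟩ := exists_between hq
  have hr₀ : 0 < r := (norm_nonneg q).trans_lt hqr
  exact (Complex.differentiableOn_tsum_of_summable_norm (summable_zpow_sq hr₀ hr)
    (fun n => differentiableOn_zpow_sq n _) Metric.isOpen_ball
    fun n z hz => norm_zpow_sq_le (mem_ball_zero_iff.mp hz).le n).differentiableAt
      (Metric.isOpen_ball.mem_nhds (mem_ball_zero_iff.mpr hqr))

lemma mul_deriv_theta (hq₀ : q ≠ 0) (hq : ‖q‖ < 1) :
    q * deriv theta q = ∑' n : ℤ, (n : ℂ) ^ 2 * q ^ n ^ 2 := by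
  obtain ⟨r, hqr, hr⟩ := exists_between hq
  have hr₀ : 0 < r := (norm_nonneg q).trans_lt hqr
  have hderiv := Complex.hasSum_deriv_of_summable_norm (summable_zpow_sq hr₀ hr)
    (fun n => differentiableOn_zpow_sq n _) Metric.isOpen_ball
    (fun n z hz => norm_zpow_sq_le (mem_ball_zero_iff.mp hz).le n) (mem_ball_zero_iff.mpr hqr)
  refine ((hderiv.mul_left q).tsum_eq.symm.trans (tsum_congr fun n => ?_))
  rw [deriv_zpow, zpow_sub_one₀ hq₀]
  push_cast
  field_simp

lemma mul_deriv_theta_neg (hq₀ : q ≠ 0) (hq : ‖q‖ < 1) :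
    -q * deriv theta (-q) = ∑' n : ℤ, (n : ℂ) ^ 2 * ((-1) ^ n * q ^ n ^ 2) := by
  rw [mul_deriv_theta (neg_ne_zero.mpr hq₀) (by rwa [norm_neg])]
  simp only [neg_zpow_sq]

/-- The general term of the double series, over pairs of integers, of `q` times the Wronskian of
`z ↦ theta (-z)` and `theta`. -/
noncomputable def wronskianTerm (q : ℂ) (c : ℤ × ℤ) : ℂ :=
  (-1) ^ c.2 * ((c.1 : ℂ) ^ 2 - (c.2 : ℂ) ^ 2) * q ^ (c.1 ^ 2 + c.2 ^ 2)

lemma neg_one_zpow_sub (a b : ℤ) : (-1 : ℂ) ^ (a - b) = (-1) ^ a * (-1) ^ b := by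
  rw [zpow_sub₀ (neg_ne_zero.mpr one_ne_zero), div_eq_mul_inv, ← inv_zpow, inv_neg, inv_one]

lemma tsum_wronskianTerm_rotate_even (q : ℂ) :
    ∑' c : ℤ × ℤ, wronskianTerm q (c.1 + c.2, c.1 - c.2) = 0 := by
  refine tsum_eq_zero_of_apply_equiv_eq_neg ((Equiv.neg ℤ).prodCongr (Equiv.refl ℤ)) fun c => ?_
  have hsign : (-1 : ℂ) ^ (-c.1 - c.2) = (-1) ^ (c.1 - c.2) := by
    rw [neg_one_zpow_sub, neg_one_zpow_sub, ← zero_sub c.1, neg_one_zpow_sub, zpow_zero, one_mul]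
  simp only [wronskianTerm, Equiv.prodCongr_apply, Prod.map_fst, Prod.map_snd, Equiv.neg_apply,
    Equiv.refl_apply, hsign,
    show (-c.1 + c.2) ^ 2 + (-c.1 - c.2) ^ 2 = (c.1 + c.2) ^ 2 + (c.1 - c.2) ^ 2 by ring]
  push_cast
  ring

lemma tsum_wronskianTerm_rotate_odd (hq₀ : q ≠ 0) (hq : ‖q‖ < 1) :
    ∑' c : ℤ × ℤ, wronskianTerm q (c.1 + c.2 + 1, c.1 - c.2) = 4 * q * eulerF (q ^ 4) ^ 6 := by
  have hp₀ : q ^ 2 ≠ 0 := pow_ne_zero 2 hq₀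
  have hp := norm_pow_lt_one hq two_ne_zero
  have hexp (c : ℤ × ℤ) : q ^ ((c.1 + c.2 + 1) ^ 2 + (c.1 - c.2) ^ 2)
      = q * ((q ^ 2) ^ (c.1 * (c.1 + 1)) * (q ^ 2) ^ (c.2 * (c.2 + 1))) := by
    rw [← zpow_add₀ hp₀, ← zpow_natCast q 2, ← zpow_mul, ← zpow_one_add₀ hq₀]
    congr 1
    push_cast
    ring
  have hcube := summable_norm_sign_mul_two_mul_add_one_mul_zpow hp₀ hp
  calc _ = ∑' c : ℤ × ℤ, q * (((q ^ 2) ^ (c.1 * (c.1 + 1)) * ((-1) ^ c.1 * (2 * c.1 + 1)))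
          * ((q ^ 2) ^ (c.2 * (c.2 + 1)) * ((-1) ^ c.2 * (2 * c.2 + 1)))) := by
        refine tsum_congr fun c => ?_
        rw [wronskianTerm, hexp, neg_one_zpow_sub]
        push_cast
        ring
    _ = 4 * q * eulerF (q ^ 4) ^ 6 := by
        rw [tsum_mul_left, ← tsum_mul_tsum_of_summable_norm hcube hcube,
          tsum_sign_mul_two_mul_add_one_mul_zpow hp₀ hp, ← pow_mul]
        ring

lemma theta_wronskian (hq₀ : q ≠ 0) (hq : ‖q‖ < 1) :
    q * deriv theta q * theta (-q) - theta q * (-q * deriv theta (-q))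
      = 4 * q * eulerF (q ^ 4) ^ 6 := by
  have hθ := summable_norm_zpow_sq hq₀ hq
  have hD := summable_norm_pow_mul_zpow hq₀ hq 2 abs_le_sq_add_one
  have hθs : Summable fun n : ℤ => ‖(-1 : ℂ) ^ n * q ^ n ^ 2‖ := by simpa using hθ
  have hDs : Summable fun n : ℤ => ‖(n : ℂ) ^ 2 * ((-1) ^ n * q ^ n ^ 2)‖ := by simpa using hD
  have hleft := summable_mul_of_summable_norm hD hθs
  have hright := summable_mul_of_summable_norm hθ hDs
  have hterm (c : ℤ × ℤ) : (c.1 : ℂ) ^ 2 * q ^ c.1 ^ 2 * ((-1) ^ c.2 * q ^ c.2 ^ 2)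
      - q ^ c.1 ^ 2 * ((c.2 : ℂ) ^ 2 * ((-1) ^ c.2 * q ^ c.2 ^ 2)) = wronskianTerm q c := by
    rw [wronskianTerm, zpow_add₀ hq₀]
    ring
  have hsum : Summable (wronskianTerm q) := (hleft.sub hright).congr hterm
  rw [mul_deriv_theta hq₀ hq, mul_deriv_theta_neg hq₀ hq, theta_neg, theta,
    tsum_mul_tsum_of_summable_norm hD hθs, tsum_mul_tsum_of_summable_norm hθ hDs,
    ← hleft.tsum_sub hright, tsum_congr hterm, tsum_int_prod_eq_tsum_rotate_add hsum,
    tsum_wronskianTerm_rotate_even, tsum_wronskianTerm_rotate_odd hq₀ hq, zero_add]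

end Theta

/-! ### Lambert series -/

section Lambert

variable {q x : ℂ}

/-- The Lambert series `∑ n q ^ n / (1 - q ^ n) = ∑ σ(n) q ^ n`, expanded as a double series with
both indices shifted by one. -/
noncomputable def lambert (q : ℂ) : ℂ :=
  ∑' c : ℕ × ℕ, ((c.1 : ℂ) + 1) * q ^ ((c.1 + 1) * (c.2 + 1))

/-- The Lambert series `∑ σ(n) q ^ n` over odd `n`, expanded as a double series over the odd
numbers. -/
noncomputable def lambertOdd (q : ℂ) : ℂ :=
  ∑' c : ℕ × ℕ, (2 * (c.1 : ℂ) + 1) * q ^ ((2 * c.1 + 1) * (2 * c.2 + 1))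

lemma summable_lambert (hq : ‖q‖ < 1) :
    Summable fun c : ℕ × ℕ => ((c.1 : ℂ) + 1) * q ^ ((c.1 + 1) * (c.2 + 1)) := by
  have hpnat := (summable_prod_mul_pow 1 hq).prod_symm
  simpa [Function.comp_def, mul_comm] using
    (Equiv.pnatEquivNat.symm.prodCongr Equiv.pnatEquivNat.symm).summable_iff.mpr hpnat

lemma lambert_swap (q : ℂ) :
    lambert q = ∑' c : ℕ × ℕ, ((c.2 : ℂ) + 1) * q ^ ((c.1 + 1) * (c.2 + 1)) := by
  rw [lambert, ← (Equiv.prodComm ℕ ℕ).tsum_eq]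
  simp only [Equiv.prodComm_apply, Prod.fst_swap, Prod.snd_swap, mul_comm (_ + 1) (_ + 1 : ℕ)]

lemma summable_lambert_swap (hq : ‖q‖ < 1) :
    Summable fun c : ℕ × ℕ => ((c.2 : ℂ) + 1) * q ^ ((c.1 + 1) * (c.2 + 1)) :=
  (summable_lambert hq).prod_symm.congr fun c => by simp [mul_comm]

lemma summable_lambert_left_odd (hq : ‖q‖ < 1) :
    Summable fun c : ℕ × ℕ => (2 * (c.1 : ℂ) + 1) * q ^ ((2 * c.1 + 1) * (c.2 + 1)) := by
  simpa [Function.comp_def] using (summable_lambert hq).comp_injective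
    ((mul_right_injective₀ two_ne_zero).prodMap Function.injective_id)

lemma tsum_lambert_left_odd (hq : ‖q‖ < 1) :
    ∑' c : ℕ × ℕ, (2 * (c.1 : ℂ) + 1) * q ^ ((2 * c.1 + 1) * (c.2 + 1))
      = lambert q - 2 * lambert (q ^ 2) := by
  rw [lambert, tsum_nat_prod_eq_tsum_even_add_tsum_odd (summable_lambert hq), eq_sub_iff_add_eq,
    lambert, ← tsum_mul_left]
  congr 1 <;> refine tsum_congr fun c => ?_
  · push_cast
    ring
  · push_cast
    ring

lemma summable_lambert_right_odd (hq : ‖q‖ < 1) :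
    Summable fun c : ℕ × ℕ => ((c.2 : ℂ) + 1) * q ^ ((2 * c.1 + 1) * (c.2 + 1)) := by
  simpa [Function.comp_def] using (summable_lambert_swap hq).comp_injective
    ((mul_right_injective₀ two_ne_zero).prodMap Function.injective_id)

lemma tsum_lambert_right_odd (hq : ‖q‖ < 1) :
    ∑' c : ℕ × ℕ, ((c.2 : ℂ) + 1) * q ^ ((2 * c.1 + 1) * (c.2 + 1))
      = lambert q - lambert (q ^ 2) := by
  rw [lambert_swap, tsum_nat_prod_eq_tsum_even_add_tsum_odd (summable_lambert_swap hq),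
    eq_sub_iff_add_eq, lambert_swap]
  congr 1
  exact tsum_congr fun c => by ring

lemma summable_lambertOdd (hq : ‖q‖ < 1) :
    Summable fun c : ℕ × ℕ => (2 * (c.1 : ℂ) + 1) * q ^ ((2 * c.1 + 1) * (2 * c.2 + 1)) := by
  simpa [Function.comp_def] using (summable_lambert_left_odd hq).comp_injective
    (Function.injective_id.prodMap (mul_right_injective₀ two_ne_zero))

lemma lambertOdd_eq (hq : ‖q‖ < 1) :
    lambertOdd q = lambert q - 3 * lambert (q ^ 2) + 2 * lambert (q ^ 4) := by
  have hsplit := tsum_prod_nat_eq_tsum_even_add_tsum_odd (summable_lambert_left_odd hq)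
  have heven (c : ℕ × ℕ) : q ^ ((2 * c.1 + 1) * (2 * c.2 + 1 + 1))
      = (q ^ 2) ^ ((2 * c.1 + 1) * (c.2 + 1)) := by ring
  simp only [heven] at hsplit
  rw [tsum_lambert_left_odd hq, tsum_lambert_left_odd (norm_pow_lt_one hq two_ne_zero),
    ← pow_mul] at hsplit
  rw [lambertOdd]
  linear_combination -hsplit

lemma lambertOdd_neg (q : ℂ) : lambertOdd (-q) = -lambertOdd q := by
  rw [lambertOdd, lambertOdd, ← tsum_neg]
  refine tsum_congr fun c => ?_
  rw [((odd_two_mul_add_one c.1).mul (odd_two_mul_add_one c.2)).neg_pow, mul_neg]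

lemma lambert_sub_lambert_neg (hq : ‖q‖ < 1) : lambert q - lambert (-q) = 2 * lambertOdd q := by
  have hneg := lambertOdd_eq (q := -q) (by rwa [norm_neg])
  rw [lambertOdd_neg, neg_sq, Even.neg_pow (by decide)] at hneg
  linear_combination hneg - lambertOdd_eq hq

lemma Dy_eq_lambertOdd (hx : ‖x‖ < 1) : Dy x = lambertOdd (x ^ 16) := by
  rw [lambertOdd, tsum_prod_eq_tsum_diag_add_tsum_lt
    (summable_lambertOdd (norm_pow_lt_one hx (by decide))), Dy]
  congr 1 <;> refine tsum_congr fun c => ?_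
  · ring
  · simp only [Prod.fst_swap, Prod.snd_swap]
    ring

lemma Dyz_eq_lambert (hx : ‖x‖ < 1) : Dyz x = 12 * lambert (x ^ 64) - 6 * lambert (x ^ 32) := by
  have hq := norm_pow_lt_one hx (k := 32) (by decide)
  have hp := norm_pow_lt_one hx (k := 64) (by decide)
  have hleft := (summable_lambert_left_odd hq).mul_left (-2)
  have hright := (summable_lambert_right_odd hq).mul_left (-4)
  have hall := ((summable_lambert hp).add (summable_lambert_swap hp)).mul_left 2
  have hterm (c : ℕ × ℕ) : -(4 * ((c.1 : ℂ) + 1) + 4 * ((c.2 : ℂ) + 1) - 2)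
        * x ^ (32 * (2 * (c.1 + 1) - 1) * (c.2 + 1))
      + (2 * ((c.1 : ℂ) + 1) + 2 * ((c.2 : ℂ) + 1)) * x ^ (64 * (c.1 + 1) * (c.2 + 1))
      = -2 * ((2 * (c.1 : ℂ) + 1) * (x ^ 32) ^ ((2 * c.1 + 1) * (c.2 + 1)))
        + -4 * (((c.2 : ℂ) + 1) * (x ^ 32) ^ ((2 * c.1 + 1) * (c.2 + 1)))
        + 2 * (((c.1 : ℂ) + 1) * (x ^ 64) ^ ((c.1 + 1) * (c.2 + 1))
          + ((c.2 : ℂ) + 1) * (x ^ 64) ^ ((c.1 + 1) * (c.2 + 1))) := by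
    rw [show 2 * (c.1 + 1) - 1 = 2 * c.1 + 1 by lia]
    ring
  rw [Dyz, tsum_congr hterm, (hleft.add hright).tsum_add hall, hleft.tsum_add hright,
    tsum_mul_left, tsum_mul_left, tsum_mul_left,
    (summable_lambert hp).tsum_add (summable_lambert_swap hp), ← lambert, ← lambert_swap,
    tsum_lambert_left_odd hq, tsum_lambert_right_odd hq, ← pow_mul]
  ring

end Lambert

/-! ### The four squares theorem -/

section FourSquares

variable {q : ℂ}

lemma lambert_zero : lambert 0 = 0 := by
  simp [lambert]

lemma theta_zero : theta 0 = 1 := by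
  have hsingle : theta 0 = (0 : ℂ) ^ (0 : ℤ) ^ 2 := tsum_eq_single 0 fun n hn =>
    zero_zpow _ (pow_ne_zero 2 hn)
  simpa using hsingle

lemma hasSum_lambert (hq : ‖q‖ < 1) :
    HasSum (fun n : ℕ => ((n : ℂ) + 1) * q ^ (n + 1) / (1 - q ^ (n + 1))) (lambert q) := by
  refine (summable_lambert hq).hasSum.prod_fiberwise fun n => ?_
  have hgeom := (hasSum_geometric_of_norm_lt_one
    (norm_pow_lt_one hq n.add_one_ne_zero)).mul_left (((n : ℂ) + 1) * q ^ (n + 1))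
  rw [← div_eq_mul_inv] at hgeom
  exact hgeom.congr_fun fun m => by ring

lemma logDeriv_one_sub_pow (q : ℂ) (n : ℕ) :
    logDeriv (fun z : ℂ => 1 - z ^ (n + 1)) q = -((n + 1) * q ^ n / (1 - q ^ (n + 1))) := by
  rw [logDeriv_apply, deriv_const_sub, deriv_pow_field]
  push_cast
  rw [neg_div]

lemma differentiableAt_eulerF (hq : ‖q‖ < 1) : DifferentiableAt ℂ eulerF q :=
  ModularForm.differentiableOn_tprod_one_sub_pow.differentiableAt
    (Metric.isOpen_ball.mem_nhds (mem_ball_zero_iff.mpr hq))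

lemma mul_deriv_eulerF (hq : ‖q‖ < 1) : q * deriv eulerF q = -lambert q * eulerF q := by
  rcases eq_or_ne q 0 with rfl | hq₀
  · simp [lambert_zero]
  have hF := eulerF_ne_zero hq
  have hsum : HasSum (fun n : ℕ => logDeriv (fun z : ℂ => 1 - z ^ (n + 1)) q)
      (-(q⁻¹ * lambert q)) := by
    refine ((hasSum_lambert hq).mul_left q⁻¹).neg.congr_fun fun n => ?_
    rw [logDeriv_one_sub_pow, pow_succ]
    field_simp
  have hlog : logDeriv eulerF q = -(q⁻¹ * lambert q) :=
    (logDeriv_tprod_eq_tsum Metric.isOpen_ball (mem_ball_zero_iff.mpr hq)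
      (fun n => one_sub_pow_ne_zero hq n.succ_ne_zero) (fun n => by fun_prop) hsum.summable
      ModularForm.multipliableLocallyUniformlyOn_one_sub_pow hF).trans hsum.tsum_eq
  rw [logDeriv_apply, div_eq_iff hF] at hlog
  rw [hlog]
  field_simp

lemma continuousAt_lambert_zero : ContinuousAt lambert 0 := by
  have hF : AnalyticAt ℂ eulerF 0 := DifferentiableOn.analyticAt
    (fun z hz => (differentiableAt_eulerF (mem_ball_zero_iff.mp hz)).differentiableWithinAt)
    (Metric.ball_mem_nhds 0 one_pos)
  have hquot : ContinuousAt (fun z => -(z * deriv eulerF z) / eulerF z) 0 :=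
    (continuousAt_id.mul hF.deriv.continuousAt).neg.div hF.continuousAt (eulerF_ne_zero (by simp))
  refine hquot.congr ?_
  filter_upwards [Metric.ball_mem_nhds (0 : ℂ) one_pos] with z hz
  have hz' := mem_ball_zero_iff.mp hz
  rw [mul_deriv_eulerF hz', neg_mul, neg_neg, mul_div_cancel_right₀ _ (eulerF_ne_zero hz')]

lemma mul_deriv_theta_neg_eq_lambert (hq₀ : q ≠ 0) (hq : ‖q‖ < 1) :
    -q * deriv theta (-q) = theta (-q) * (2 * lambert (q ^ 2) - 2 * lambert q) := by
  have hp := norm_pow_lt_one hq two_ne_zero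
  have htheta : HasDerivAt (fun z => theta (-z)) (deriv theta (-q) * -1) q :=
    (differentiableAt_theta (by rwa [norm_neg])).hasDerivAt.comp q (hasDerivAt_neg q)
  have hF : HasDerivAt (fun z => eulerF (z ^ 2)) (deriv eulerF (q ^ 2) * (2 * q)) q :=
    .comp (h₂ := eulerF) q (differentiableAt_eulerF hp).hasDerivAt
      (by simpa using hasDerivAt_pow 2 q)
  have hFsq : HasDerivAt (fun z => eulerF z ^ 2) (2 * eulerF q * deriv eulerF q) q := by
    simpa using (differentiableAt_eulerF hq).hasDerivAt.fun_pow 2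
  have heq : (fun z => theta (-z) * eulerF (z ^ 2)) =ᶠ[𝓝 q] fun z => eulerF z ^ 2 := by
    filter_upwards [isOpen_ne.mem_nhds hq₀, Metric.isOpen_ball.mem_nhds
      (mem_ball_zero_iff.mpr hq)] with z hz₀ hz
    exact theta_neg_mul_eulerF hz₀ (mem_ball_zero_iff.mp hz)
  have hderiv := (htheta.fun_mul hF).unique (hFsq.congr_of_eventuallyEq heq)
  refine mul_right_cancel₀ (eulerF_ne_zero hp) ?_
  linear_combination q * hderiv - 2 * theta (-q) * mul_deriv_eulerF hp
    + 2 * eulerF q * mul_deriv_eulerF hq + 2 * lambert q * theta_neg_mul_eulerF hq₀ hq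

lemma lambertOdd_mul_theta_mul_theta_neg (hq₀ : q ≠ 0) (hq : ‖q‖ < 1) :
    lambertOdd q * (theta q * theta (-q)) = q * eulerF (q ^ 4) ^ 6 := by
  have hneg := mul_deriv_theta_neg_eq_lambert hq₀ hq
  have hpos := mul_deriv_theta_neg_eq_lambert (neg_ne_zero.mpr hq₀) (by rwa [norm_neg])
  rw [neg_neg, neg_sq] at hpos
  linear_combination (theta_wronskian hq₀ hq - theta (-q) * hpos + theta q * hneg
    - 2 * theta q * theta (-q) * lambert_sub_lambert_neg hq) / 4

lemma sixteen_mul_lambertOdd (hq : ‖q‖ < 1) : 16 * lambertOdd q = q * psi q ^ 4 := by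
  rcases eq_or_ne q 0 with rfl | hq₀
  · simp [lambertOdd]
  have hF := eulerF_ne_zero (norm_pow_lt_one hq two_ne_zero)
  refine mul_right_cancel₀ (pow_ne_zero 4 hF) ?_
  calc 16 * lambertOdd q * eulerF (q ^ 2) ^ 4
      = 16 * (lambertOdd q * (theta q * theta (-q))) * eulerF (q ^ 4) ^ 2 := by
        rw [← theta_mul_theta_neg hq₀ hq]; ring
    _ = q * (2 * eulerF (q ^ 4) ^ 2) ^ 4 := by
        rw [lambertOdd_mul_theta_mul_theta_neg hq₀ hq]; ring
    _ = q * psi q ^ 4 * eulerF (q ^ 2) ^ 4 := by rw [← psi_mul_eulerF hq₀ hq]; ring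

lemma theta_pow_four_sub_theta_sq_pow_four (hq : ‖q‖ < 1) :
    theta q ^ 4 - theta (q ^ 2) ^ 4 = 8 * lambertOdd q + 16 * lambertOdd (q ^ 2) := by
  rcases eq_or_ne q 0 with rfl | hq₀
  · simp [lambertOdd]
  have hodd := sixteen_mul_lambertOdd hq
  have hodd' := sixteen_mul_lambertOdd (norm_pow_lt_one hq two_ne_zero)
  calc theta q ^ 4 - theta (q ^ 2) ^ 4 = (theta q ^ 2) ^ 2 - theta (q ^ 2) ^ 4 := by ring
    _ = q * (2 * psi (q ^ 2) * theta (q ^ 2)) ^ 2 / 2 + q ^ 2 * psi (q ^ 2) ^ 4 := by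
        rw [theta_sq hq₀ hq]; ring
    _ = 8 * lambertOdd q + 16 * lambertOdd (q ^ 2) := by
        rw [← psi_sq hq₀ hq]
        linear_combination -hodd / 2 - hodd'

/-- Jacobi's four squares theorem. -/
theorem theta_pow_four (hq : ‖q‖ < 1) :
    theta q ^ 4 = 1 + 8 * lambert q - 32 * lambert (q ^ 4) := by
  let h (z : ℂ) : ℂ := theta z ^ 4 - 8 * lambert z + 32 * lambert (z ^ 4)
  have hcont : ContinuousAt h 0 := by
    have htheta := (differentiableAt_theta (q := 0) (by simp)).continuousAt
    have hlambert : ContinuousAt (fun z => lambert (z ^ 4)) 0 :=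
      .comp (g := lambert) (by simpa using continuousAt_lambert_zero) (continuousAt_pow 0 4)
    exact ((htheta.pow 4).sub (continuousAt_lambert_zero.const_mul 8)).add
      (hlambert.const_mul 32)
  have hsq (z : ℂ) (hz : ‖z‖ < 1) : h (z ^ 2) = h z := by
    have hodd := lambertOdd_eq hz
    have hodd' := lambertOdd_eq (norm_pow_lt_one hz two_ne_zero)
    have hstep := theta_pow_four_sub_theta_sq_pow_four hz
    simp only [h, ← pow_mul, Nat.reduceMul] at hodd' ⊢
    linear_combination -hstep - 8 * hodd - 16 * hodd'
  have hconst := eq_apply_zero_of_apply_sq_eq hcont hsq hq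
  simp only [h, theta_zero, lambert_zero, zero_pow four_ne_zero] at hconst
  linear_combination hconst

end FourSquares

/-! ### The mirror identity -/

section Mirror

variable {t x : ℂ}

lemma sixteen_mul_Dy (hx : ‖x‖ < 1) : 16 * Dy x = x ^ 16 * psi (x ^ 16) ^ 4 := by
  rw [Dy_eq_lambertOdd hx, sixteen_mul_lambertOdd (norm_pow_lt_one hx (by decide))]

lemma Dyz_sub_quarter (hx : ‖x‖ < 1) :
    Dyz x - 1 / 4 = -(theta (x ^ 32) ^ 4 + x ^ 32 * psi (x ^ 32) ^ 4) / 4 := by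
  have hq := norm_pow_lt_one hx (k := 32) (by decide)
  have hodd := lambertOdd_eq hq
  rw [Dyz_eq_lambert hx, theta_pow_four hq, ← sixteen_mul_lambertOdd hq]
  simp only [← pow_mul, Nat.reduceMul] at hodd ⊢
  linear_combination 4 * hodd

lemma theta_pow_four_add_mul_psi_pow_four_sq (ht₀ : t ≠ 0) (ht : ‖t‖ < 1) :
    (theta (t ^ 2) ^ 4 + t ^ 2 * psi (t ^ 2) ^ 4) ^ 2
      = theta (-t ^ 2) ^ 8 + t ^ 2 * psi t ^ 8 / 4 := by
  have hdiff := theta_pow_four_sub_theta_neg_pow_four (pow_ne_zero 2 ht₀)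
    (norm_pow_lt_one ht two_ne_zero)
  calc (theta (t ^ 2) ^ 4 + t ^ 2 * psi (t ^ 2) ^ 4) ^ 2
      = (theta (t ^ 2) ^ 4 - t ^ 2 * psi (t ^ 2) ^ 4) ^ 2
        + t ^ 2 * (2 * psi (t ^ 2) * theta (t ^ 2)) ^ 4 / 4 := by ring
    _ = theta (-t ^ 2) ^ 8 + t ^ 2 * psi t ^ 8 / 4 := by
        rw [← psi_sq ht₀ ht, ← hdiff]; ring

lemma theta_neg_pow_eight_mul_eulerF (ht₀ : t ≠ 0) (ht : ‖t‖ < 1) :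
    256 * theta (-t ^ 2) ^ 8 * eulerF (t ^ 4) ^ 24 = psi t ^ 8 * eulerF (t ^ 2) ^ 24 := by
  have htheta := theta_neg_mul_eulerF (pow_ne_zero 2 ht₀) (norm_pow_lt_one ht two_ne_zero)
  rw [← pow_mul] at htheta
  calc 256 * theta (-t ^ 2) ^ 8 * eulerF (t ^ 4) ^ 24
      = (theta (-t ^ 2) * eulerF (t ^ 4)) ^ 8 * (2 * eulerF (t ^ 4) ^ 2) ^ 8 := by ring
    _ = psi t ^ 8 * eulerF (t ^ 2) ^ 24 := by
        rw [htheta, ← psi_mul_eulerF ht₀ ht]; ring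

end Mirror

end SYZ

/-- Cleared-denominator, squared form of the statement that the generalized SYZ
map `σ(q_d) = (d_{yz} − (4q_d⁴)⁻¹)/d_y` of `ℙ¹_{2,4,4}` equals the inverse mirror
map `−2(1 + η(q)²⁴/(2⁶η(q²)²⁴))^{1/2}` with `q = x³²`. -/
theorem syz_eq_mirror_map_244 (x : ℂ) (hx : ‖x‖ < 1) :
    (Dyz x - 1 / 4) ^ 2 * 16 * x ^ 32 * eulerF (x ^ 64) ^ 24
      = (Dy x) ^ 2 * (64 * x ^ 32 * eulerF (x ^ 64) ^ 24 + eulerF (x ^ 32) ^ 24) := by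
  have hDy := SYZ.sixteen_mul_Dy hx
  have hDyz := SYZ.Dyz_sub_quarter hx
  rcases eq_or_ne x 0 with rfl | hx₀
  · have hDy₀ : Dy 0 = 0 := by simpa using hDy
    simp [hDy₀]
  have ht := SYZ.norm_pow_lt_one hx (k := 16) (by decide)
  have hsq := SYZ.theta_pow_four_add_mul_psi_pow_four_sq (pow_ne_zero 16 hx₀) ht
  have hF := SYZ.theta_neg_pow_eight_mul_eulerF (pow_ne_zero 16 hx₀) ht
  simp only [← pow_mul, Nat.reduceMul] at hsq hF
  calc (Dyz x - 1 / 4) ^ 2 * 16 * x ^ 32 * eulerF (x ^ 64) ^ 24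
      = x ^ 32 * eulerF (x ^ 64) ^ 24
        * (SYZ.theta (-x ^ 32) ^ 8 + x ^ 32 * SYZ.psi (x ^ 16) ^ 8 / 4) := by rw [hDyz, ← hsq]; ring
    _ = x ^ 32 * SYZ.psi (x ^ 16) ^ 8 / 256
        * (64 * x ^ 32 * eulerF (x ^ 64) ^ 24 + eulerF (x ^ 32) ^ 24) := by
        linear_combination x ^ 32 * hF / 256
    _ = _ := by
        linear_combination -(16 * Dy x + x ^ 16 * SYZ.psi (x ^ 16) ^ 4) / 256
          * (64 * x ^ 32 * eulerF (x ^ 64) ^ 24 + eulerF (x ^ 32) ^ 24) * hDy
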